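/- Let $(p_i)_{i \in \mathbb{Z}}$ be real numbers with $p_i \in [i, i + 1/3]$ for every $i \in \mathbb{Z}$, let $P = \{p_i : i \in \mathbb{Z}\}$, and let $G$ be the simple graph on $P$ whose edges are exactly the pairs $\{p_i, p_{i+1}\}$, $i \in \mathbb{Z}$. Then $G$ is a stable multi-matching in which every vertex has degree exactly $2$, and $G$ is connected (hence has an infinite connected component). -/

import Mathlib

/-- `G` is a stable multi-matching on `P ⊆ ℝ`: for any two distinct points, either they are
adjacent, or one of them has no incident edge longer than the distance between them. -/
def IsStableMultiMatching (P : Set ℝ) (G : SimpleGraph P) : Prop :=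
  ∀ x y : P, x ≠ y →
    G.Adj x y ∨
    (∀ z : P, G.Adj x z → |(z : ℝ) - (x : ℝ)| ≤ |(y : ℝ) - (x : ℝ)|) ∨
    (∀ z : P, G.Adj y z → |(z : ℝ) - (y : ℝ)| ≤ |(y : ℝ) - (x : ℝ)|)

/-- Example 3: if `p i ∈ [i, i + 1/3]` for each `i ∈ ℤ`, `P = {p i}`, and `G` is the graph on
`P` whose edges are exactly the pairs `{p i, p (i+1)}`, then `G` is a 2-regular stable
multi-matching and `G` is connected (hence has an infinite component). -/
theorem percolating_example
    (p : ℤ → ℝ) (hp : ∀ i : ℤ, p i ∈ Set.Icc (i : ℝ) ((i : ℝ) + 1 / 3))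
    (P : Set ℝ) (hP : P = Set.range p)
    (G : SimpleGraph P)
    (hG : ∀ u v : P, G.Adj u v ↔ ∃ i : ℤ,
      ((u : ℝ) = p i ∧ (v : ℝ) = p (i + 1)) ∨ ((u : ℝ) = p (i + 1) ∧ (v : ℝ) = p i)) :
    IsStableMultiMatching P G ∧ (∀ x : P, {y : P | G.Adj x y}.ncard = 2) ∧ G.Connected := by
  subst hP
  have lo : ∀ i : ℤ, (i : ℝ) ≤ p i := fun i => (hp i).1
  have hi : ∀ i : ℤ, p i ≤ (i : ℝ) + 1 / 3 := fun i => (hp i).2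
  have inj : Function.Injective p := by
    intro i j h
    have h1 : (i : ℝ) < ((j + 1 : ℤ) : ℝ) := by
      push_cast; linarith [lo i, hi i, lo j, hi j]
    have h2 : (j : ℝ) < ((i + 1 : ℤ) : ℝ) := by
      push_cast; linarith [lo i, hi i, lo j, hi j]
    have h1' := Int.cast_lt.mp h1
    have h2' := Int.cast_lt.mp h2
    omega
  let q : ℤ → Set.range p := fun i => ⟨p i, i, rfl⟩
  have qinj : Function.Injective q := fun i j h => inj (congrArg Subtype.val h)
  have adj : ∀ i j : ℤ, G.Adj (q i) (q j) ↔ (j = i + 1 ∨ j = i - 1) := by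
    intro i j
    rw [hG]
    constructor
    · rintro ⟨k, ⟨h1, h2⟩ | ⟨h1, h2⟩⟩
      · have := inj h1
        have := inj h2
        omega
      · have := inj h1
        have := inj h2
        omega
    · rintro (h | h)
      · exact ⟨i, Or.inl ⟨rfl, by rw [← h]⟩⟩
      · subst h
        exact ⟨i - 1, Or.inr ⟨by simp [q], rfl⟩⟩
  have edge : ∀ i j : ℤ, G.Adj (q i) (q j) → |p j - p i| ≤ 4 / 3 := by
    intro i j h
    rw [abs_le]
    rcases (adj i j).1 h with h | h
    all_goals
      have h' : (j : ℝ) = _ := congrArg (Int.cast : ℤ → ℝ) h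
      push_cast at h'
      constructor <;> linarith [lo i, hi i, lo j, hi j]
  have qsurj : ∀ x : Set.range p, ∃ i, x = q i := by
    rintro ⟨_, i, rfl⟩
    exact ⟨i, rfl⟩
  refine ⟨?_, ?_, ?_⟩
  · intro x y hxy
    obtain ⟨i, rfl⟩ := qsurj x
    obtain ⟨j, rfl⟩ := qsurj y
    by_cases h : G.Adj (q i) (q j)
    · exact Or.inl h
    right; left
    intro z hz
    obtain ⟨k, rfl⟩ := qsurj z
    refine (edge i k hz).trans ?_
    change 4 / 3 ≤ |p j - p i|
    rw [adj] at h
    have hne : i ≠ j := fun e => hxy (by rw [e])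
    have hc : i + 2 ≤ j ∨ j + 2 ≤ i := by omega
    rw [le_abs]
    rcases hc with hc | hc
    · left
      have h' : ((i + 2 : ℤ) : ℝ) ≤ j := Int.cast_le.mpr hc
      push_cast at h'
      linarith [lo i, hi i, lo j, hi j]
    · right
      have h' : ((j + 2 : ℤ) : ℝ) ≤ i := Int.cast_le.mpr hc
      push_cast at h'
      linarith [lo i, hi i, lo j, hi j]
  · intro x
    obtain ⟨i, rfl⟩ := qsurj x
    have : {y | G.Adj (q i) y} = {q (i + 1), q (i - 1)} := by
      ext y
      obtain ⟨j, rfl⟩ := qsurj y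
      simp only [Set.mem_setOf_eq, adj, Set.mem_insert_iff, Set.mem_singleton_iff, qinj.eq_iff]
    rw [this]
    apply Set.ncard_pair
    intro h
    have := qinj h
    omega
  · have reach : ∀ i : ℤ, G.Reachable (q 0) (q i) := by
      intro i
      induction i using Int.induction_on with
      | zero => exact SimpleGraph.Reachable.refl _
      | succ k ih => exact ih.trans ((adj _ _).2 (Or.inl rfl)).reachable
      | pred k ih => exact ih.trans ((adj _ _).2 (Or.inr rfl)).reachable
    haveI : Nonempty (Set.range p) := ⟨q 0⟩
    refine SimpleGraph.Connected.mk ?_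
    intro x y
    obtain ⟨i, rfl⟩ := qsurj x
    obtain ⟨j, rfl⟩ := qsurj y
    exact (reach i).symm.trans (reach j)
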